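/- arXiv:math/9602205 — 4 statements merged into one kernel-verified Lean document; each statement's English description precedes it below -/
import Mathlib

section
/- Let X_i (i ∈ ℕ) be finite nonempty sets with weak measures ν_n : P(X_n) → ℕ satisfying Condition 1. Let k ≤ n ∈ ℕ, let T be a nonempty finite tree of sequences t with t(i) ∈ X_i, all of whose maximal elements have length n, such that |root(T)| ≥ k, and let Ψ : Top(T) → {0, 1, …, K_k − 1} be any function. Then there is a nonempty subtree T' ⊆ T such that Top(T') ⊆ Top(T), Ψ is constant on Top(T'), and ν*_{T'}(t) ≥ ν*_T(t) − 1 for every t ∈ nonmax(T'). -/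
open Set List

section Trees

variable {α β : Type*}

/-- `M_n = ∏_{i<n} |X_i|`. -/
def Mfun (X : ℕ → Finset α) (n : ℕ) : ℕ := ∏ i ∈ Finset.range n, (X i).card

/-- `K_n = 2^{n·M_n}`. -/
def Kfun (X : ℕ → Finset α) (n : ℕ) : ℕ := 2 ^ (n * Mfun X n)

/-- A tree over the alphabet sequence `X`: a nonempty set of finite sequences `t` with
`t(i) ∈ X_i`, closed under initial segments. -/
def IsTreeOn (X : ℕ → Finset α) (T : Set (List α)) : Prop :=
  T.Nonempty ∧ (∀ t ∈ T, ∀ i : Fin t.length, t.get i ∈ X i.1) ∧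
    ∀ t ∈ T, ∀ s, s <+: t → s ∈ T

/-- `suc_T(t)`, the set of one-step extensions of `t` in `T`. -/
def sucSet (X : ℕ → Finset α) (T : Set (List α)) (t : List α) : Set α :=
  {x | x ∈ X t.length ∧ t ++ [x] ∈ T}

/-- `ν*_T(t) = ν_{|t|}(suc_T(t))`. -/
def nuStar (X : ℕ → Finset α) (ν : ℕ → Set α → ℕ) (T : Set (List α)) (t : List α) : ℕ :=
  ν t.length (sucSet X T t)

/-- `ν**_T(t) = ν*_T(t) / (M_{|t|})^{|t|²}`. -/
def nuStarStar (X : ℕ → Finset α) (ν : ℕ → Set α → ℕ) (T : Set (List α)) (t : List α) : ℕ :=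
  nuStar X ν T t / (Mfun X t.length) ^ (t.length ^ 2)

/-- Membership in the forcing partial order `ℙ(X)`: an infinite tree in which every node has a
proper extension and for every `n` all but finitely many levels satisfy
`ν*_T(t) > n·(M_{|t|})^{|t|²}`. -/
def MemPP (X : ℕ → Finset α) (ν : ℕ → Set α → ℕ) (T : Set (List α)) : Prop :=
  IsTreeOn X T ∧ (∀ t ∈ T, ∃ x, t ++ [x] ∈ T) ∧
    ∀ n : ℕ, ∃ m : ℕ, ∀ t ∈ T, m < t.length →
      n * (Mfun X t.length) ^ (t.length ^ 2) < nuStar X ν T t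

/-- `smll_n(T)`: the nodes `t⌢⟨x⟩` of `T` with `ν**_T(t) ≤ n`. -/
def smll (X : ℕ → Finset α) (ν : ℕ → Set α → ℕ) (n : ℕ) (T : Set (List α)) :
    Set (List α) :=
  {s | s ∈ T ∧ ∃ t x, s = t ++ [x] ∧ nuStarStar X ν T t ≤ n}

/-- The fusion relation `T ≤_n T'`. -/
def leqN (X : ℕ → Finset α) (ν : ℕ → Set α → ℕ) (n : ℕ) (T T' : Set (List α)) : Prop :=
  T ⊆ T' ∧ smll X ν n T' ⊆ T ∧ ∀ t ∈ T, t ∉ smll X ν n T' → n ≤ nuStar X ν T t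

/-- Condition 1 (weak measures survive finite partitions into `K_n` pieces). -/
def Cond1 (X : ℕ → Finset α) (ν : ℕ → Set α → ℕ) : Prop :=
  ∀ n k : ℕ, ∀ A : Set α, A ⊆ ↑(X n) → k + 1 ≤ ν n A →
    ∀ f : Fin (Kfun X n) → Set α, A = ⋃ i, f i → ∃ i, k ≤ ν n (f i)

/-- The maximal elements of a set of sequences. -/
def topOf (T : Set (List β)) : Set (List β) := {t | t ∈ T ∧ ∀ s ∈ T, t <+: s → s = t}

/-- The non-maximal elements of a set of sequences. -/
def nonmaxOf (T : Set (List β)) : Set (List β) := T \ topOf T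

/-- `r` is the root of `T`: the longest element of `T` comparable with every element of `T`. -/
def isRoot (T : Set (List β)) (r : List β) : Prop :=
  r ∈ T ∧ (∀ s ∈ T, s <+: r ∨ r <+: s) ∧
    ∀ r' ∈ T, (∀ s ∈ T, s <+: r' ∨ r' <+: s) → r' <+: r

/-- The height of a tree: the supremum of the lengths of its elements. -/
noncomputable def hghtOf (T : Set (List β)) : ℕ := sSup (List.length '' T)

/-- `T↾k`, the restriction of a tree to sequences of length at most `k`. -/
def restrOf (T : Set (List β)) (k : ℕ) : Set (List β) := {t | t ∈ T ∧ t.length ≤ k}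

end Trees

/-!
Colour the nodes of `T` from the top downwards: a maximal node keeps its colour under `Ψ`, and a
node below it receives a colour taken by a set of its successors of measure at least `ν*_T(t) - 1`.
Such a colour exists by Condition 1 when `k ≤ |t|`, because then `K_k ≤ K_{|t|}`, and trivially when
`|t| < k`, because then `t` lies strictly below the root and has only one successor. The nodes whose
initial segments all have the colour of the empty sequence form the required subtree.
-/

section HomogeneousSubtree

variable {α C : Type*} {X : ℕ → Finset α} {ν : ℕ → Set α → ℕ} {S T : Set (List α)} {r t : List α}
  {k n : ℕ}

theorem Kfun_le_Kfun (hX : ∀ i < n, (X i).Nonempty) (hkn : k ≤ n) : Kfun X k ≤ Kfun X n := by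
  have hM : Mfun X k ≤ Mfun X n :=
    Finset.prod_le_prod_of_subset_of_one_le' (Finset.range_mono hkn)
      fun i hi _ ↦ (hX i (Finset.mem_range.1 hi)).card_pos
  exact Nat.pow_le_pow_right two_pos (Nat.mul_le_mul hkn hM)

section Robust

variable {μ : Set α → ℕ} {A : Set α}

/-- A set `A` is robust for colourings by `C` if each of them has a nonempty colour class of measure
at least `μ A - 1`. This is what the successor sets of a tree must satisfy for a colouring to be
pulled down from the successors of a node to the node. Nonemptiness is required separately because
a weak measure need not vanish at `∅`. -/
def IsRobust (μ : Set α → ℕ) (C : Type*) (A : Set α) : Prop :=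
  ∀ f : α → C, ∃ c, (A ∩ f ⁻¹' {c}).Nonempty ∧ μ A - 1 ≤ μ (A ∩ f ⁻¹' {c})

theorem isRobust_of_subsingleton (hne : A.Nonempty) (hA : A.Subsingleton) : IsRobust μ C A := by
  intro f
  obtain ⟨a, ha⟩ := hne
  have hclass : A ∩ f ⁻¹' {f a} = A :=
    inter_eq_left.2 fun x hx ↦ congrArg f (hA hx ha)
  exact ⟨f a, ⟨a, ha, rfl⟩, by rw [hclass]; exact Nat.sub_le _ _⟩

theorem Cond1.isRobust [Finite C] (hν : Cond1 X ν) (hC : Nat.card C ≤ Kfun X n)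
    (hA : A ⊆ X n) (hne : A.Nonempty) : IsRobust (ν n) C A := by
  intro f
  -- Only colours in `f '' A` are enumerated, with repetitions, so that every class is nonempty.
  have : Nonempty (f '' A) := (hne.image f).to_subtype
  let index : C ↪ Fin (Kfun X n) := (Finite.equivFin C).toEmbedding.trans (Fin.castLEEmb hC)
  obtain ⟨colour, hcolour⟩ : ∃ colour : Fin (Kfun X n) → f '' A, Function.Surjective colour :=
    ⟨_, Function.invFun_surjective (index.injective.comp Subtype.val_injective)⟩
  have hcover : A = ⋃ i, A ∩ f ⁻¹' {(colour i : C)} := by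
    refine Subset.antisymm (fun x hx ↦ ?_) (iUnion_subset fun i ↦ inter_subset_left)
    obtain ⟨i, hi⟩ := hcolour ⟨f x, x, hx, rfl⟩
    exact mem_iUnion.2 ⟨i, hx, by rw [hi]; rfl⟩
  have hnonempty (i) : (A ∩ f ⁻¹' {(colour i : C)}).Nonempty := (colour i).2
  obtain hzero | hpos := Nat.eq_zero_or_pos (ν n A)
  · obtain ⟨a, ha⟩ := hne
    exact ⟨f a, ⟨a, ha, rfl⟩, by simp [hzero]⟩
  · obtain ⟨i, hi⟩ := hν n (ν n A - 1) A hA (Nat.sub_add_cancel hpos).le _ hcover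
    exact ⟨colour i, hnonempty i, hi⟩

end Robust

section Tree

theorem nonmaxOf_subset_nonmaxOf (hST : S ⊆ T) : nonmaxOf S ⊆ nonmaxOf T :=
  fun _ ht ↦ ⟨hST ht.1, fun htop ↦ ht.2 ⟨ht.1, fun s hs ↦ htop.2 s (hST hs)⟩⟩

theorem IsTreeOn.nil_mem (hT : IsTreeOn X T) : [] ∈ T :=
  let ⟨t, ht⟩ := hT.1
  hT.2.2 t ht [] nil_prefix

theorem IsTreeOn.nonempty_of_lt_length (hT : IsTreeOn X T) (ht : t ∈ T) {i : ℕ}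
    (hi : i < t.length) : (X i).Nonempty :=
  ⟨_, hT.2.1 t ht ⟨i, hi⟩⟩

theorem IsTreeOn.mem_sucSet (hT : IsTreeOn X T) {x : α} : x ∈ sucSet X T t ↔ t ++ [x] ∈ T := by
  refine ⟨And.right, fun hx ↦ ⟨?_, hx⟩⟩
  simpa using hT.2.1 _ hx ⟨t.length, by simp⟩

theorem IsTreeOn.nonempty_sucSet (hT : IsTreeOn X T) (ht : t ∈ nonmaxOf T) :
    (sucSet X T t).Nonempty := by
  obtain ⟨s, hs, hts, hne⟩ : ∃ s ∈ T, t <+: s ∧ s ≠ t := by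
    simpa [topOf, ht.1] using ht.2
  obtain ⟨_ | ⟨x, u⟩, rfl⟩ := hts
  · simp at hne
  · exact ⟨x, hT.mem_sucSet.2 (hT.2.2 _ hs _ ⟨u, by simp⟩)⟩

-- If `T` has no root, its nodes comparable with every other node are arbitrarily long.
theorem exists_comparable_of_forall_isRoot_le_length (hnil : [] ∈ T)
    (hroot : ∀ r, isRoot T r → k ≤ r.length) :
    ∃ r, (∀ s ∈ T, s <+: r ∨ r <+: s) ∧ k ≤ r.length := by
  by_contra! hlt
  let comparable : Set (List α) := {r | r ∈ T ∧ ∀ s ∈ T, s <+: r ∨ r <+: s}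
  have hbdd : (List.length '' comparable).Finite :=
    (finite_Iio k).subset (image_subset_iff.2 fun r hr ↦ hlt r hr.2)
  obtain ⟨r, hr, hmax⟩ :=
    hbdd.exists_maximalFor' List.length comparable ⟨[], hnil, fun _ _ ↦ .inr nil_prefix⟩
  have hisRoot : isRoot T r := by
    refine ⟨hr.1, hr.2, fun r' hr' hcomp ↦ (hr.2 r' hr').elim id fun hrr' ↦ ?_⟩
    rw [hrr'.eq_of_length_le (hmax ⟨hr', hcomp⟩ hrr'.length_le)]
  exact (hlt r hr.2).not_ge (hroot r hisRoot)

theorem subsingleton_sucSet_of_length_lt (hr : ∀ s ∈ T, s <+: r ∨ r <+: s)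
    (htr : t.length < r.length) : (sucSet X T t).Subsingleton := by
  have hprefix : ∀ x ∈ sucSet X T t, t ++ [x] <+: r := fun x hx ↦
    (hr _ hx.2).elim id fun h ↦ by rw [h.eq_of_length_le (by simpa using htr)]
  intro x hx y hy
  simpa using (prefix_of_prefix_length_le (hprefix x hx) (hprefix y hy) (by simp)).eq_of_length
    (by simp)

theorem IsTreeOn.isRobust_sucSet [Finite C] (hT : IsTreeOn X T) (hν : Cond1 X ν)
    (hC : Nat.card C ≤ Kfun X k) (hroot : ∀ r, isRoot T r → k ≤ r.length)
    (ht : t ∈ nonmaxOf T) : IsRobust (ν t.length) C (sucSet X T t) := by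
  have hne := hT.nonempty_sucSet ht
  obtain hkt | htk := le_or_gt k t.length
  · have hK := Kfun_le_Kfun (fun i hi ↦ hT.nonempty_of_lt_length ht.1 hi) hkt
    exact hν.isRobust (hC.trans hK) (fun x hx ↦ hx.1) hne
  · obtain ⟨r, hr, hkr⟩ := exists_comparable_of_forall_isRoot_le_length hT.nil_mem hroot
    exact isRobust_of_subsingleton hne (subsingleton_sucSet_of_length_lt hr (htk.trans_le hkr))

end Tree

section Colouring

/-- The colouring obtained from a colouring `Ψ` of the sequences of length `n` by backward
induction: below level `n`, the colour of `t` is computed by `step t` from the colours of the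
one-step extensions of `t`. Above level `n`, colours are inherited from level `n`, so that a node
there, which an infinite tree may have, agrees in colour with all its successors. -/
def backwardColouring (n : ℕ) (step : List α → (α → C) → C) (Ψ : List α → C) (t : List α) : C :=
  if t.length < n then step t fun x ↦ backwardColouring n step Ψ (t ++ [x]) else Ψ (t.take n)
termination_by n - t.length
decreasing_by simp only [length_append, length_singleton]; omega

theorem backwardColouring_of_lt {step : List α → (α → C) → C} {Ψ : List α → C}
    (ht : t.length < n) : backwardColouring n step Ψ t =
      step t fun x ↦ backwardColouring n step Ψ (t ++ [x]) := by
  rw [backwardColouring, if_pos ht]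

theorem backwardColouring_of_le {step : List α → (α → C) → C} {Ψ : List α → C}
    (ht : n ≤ t.length) : backwardColouring n step Ψ t = Ψ (t.take n) := by
  rw [backwardColouring, if_neg ht.not_gt]

theorem exists_colouring_of_isRobust_sucSet (htop : ∀ t ∈ topOf T, t.length ≤ n)
    (hrobust : ∀ t ∈ nonmaxOf T, IsRobust (ν t.length) C (sucSet X T t)) (Ψ : List α → C) :
    ∃ Γ : List α → C, (∀ t ∈ topOf T, Γ t = Ψ t) ∧ ∀ t ∈ nonmaxOf T,
      (sucSet X T t ∩ {x | Γ (t ++ [x]) = Γ t}).Nonempty ∧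
      nuStar X ν T t - 1 ≤ ν t.length (sucSet X T t ∩ {x | Γ (t ++ [x]) = Γ t}) := by
  have hstep (t : List α) (f : α → C) : ∃ c, (t ∈ topOf T → c = Ψ t) ∧ (t ∈ nonmaxOf T →
      (sucSet X T t ∩ f ⁻¹' {c}).Nonempty ∧
      nuStar X ν T t - 1 ≤ ν t.length (sucSet X T t ∩ f ⁻¹' {c})) := by
    by_cases ht : t ∈ nonmaxOf T
    · obtain ⟨c, hc⟩ := hrobust t ht f
      exact ⟨c, fun h ↦ absurd h ht.2, fun _ ↦ hc⟩
    · exact ⟨Ψ t, fun _ ↦ rfl, fun h ↦ absurd h ht⟩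
  choose step hstep_top hstep_nonmax using hstep
  refine ⟨backwardColouring n step Ψ, fun t ht ↦ ?_, fun t ht ↦ ?_⟩
  · obtain hlt | hge := lt_or_ge t.length n
    · rw [backwardColouring_of_lt hlt, hstep_top _ _ ht]
    · rw [backwardColouring_of_le hge, take_of_length_le (htop t ht)]
  · obtain hlt | hge := lt_or_ge t.length n
    · rw [backwardColouring_of_lt hlt]
      exact hstep_nonmax _ _ ht
    · obtain ⟨c, hne, hc⟩ := hrobust t ht fun x ↦ backwardColouring n step Ψ (t ++ [x])
      have hconst (x : α) :
          backwardColouring n step Ψ (t ++ [x]) = backwardColouring n step Ψ t := by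
        rw [backwardColouring_of_le hge, backwardColouring_of_le (by simp; omega),
          take_append_of_le_length hge]
      have hcolour : c = backwardColouring n step Ψ t := hne.some_mem.2.symm.trans (hconst _)
      rw [← hcolour]
      exact ⟨hne, hc⟩

/-- The part of `T` connected to the empty sequence through nodes of the same colour under `Γ`. -/
def monochromaticSubtree (T : Set (List α)) (Γ : List α → C) : Set (List α) :=
  {t | t ∈ T ∧ ∀ s, s <+: t → Γ s = Γ []}

variable {Γ : List α → C}

theorem monochromaticSubtree_subset : monochromaticSubtree T Γ ⊆ T := fun _ ↦ And.left

theorem colour_eq_of_mem_monochromaticSubtree (ht : t ∈ monochromaticSubtree T Γ) :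
    Γ t = Γ [] :=
  ht.2 t prefix_rfl

theorem isTreeOn_monochromaticSubtree (hT : IsTreeOn X T) (Γ : List α → C) :
    IsTreeOn X (monochromaticSubtree T Γ) := by
  refine ⟨⟨[], hT.nil_mem, fun s hs ↦ by rw [prefix_nil.1 hs]⟩, fun t ht ↦ hT.2.1 t ht.1, ?_⟩
  exact fun t ht s hs ↦ ⟨hT.2.2 t ht.1 s hs, fun u hu ↦ ht.2 u (hu.trans hs)⟩

theorem sucSet_monochromaticSubtree (ht : t ∈ monochromaticSubtree T Γ) :
    sucSet X (monochromaticSubtree T Γ) t = sucSet X T t ∩ {x | Γ (t ++ [x]) = Γ t} := by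
  ext x
  have hprefix : (∀ s, s <+: t ++ [x] → Γ s = Γ []) ↔ Γ (t ++ [x]) = Γ t := by
    simp only [prefix_concat_iff, forall_eq_or_imp, colour_eq_of_mem_monochromaticSubtree ht,
      and_iff_left_iff_imp]
    exact fun _ ↦ ht.2
  simp only [sucSet, monochromaticSubtree, mem_inter_iff, mem_ofPred_eq, hprefix, and_assoc]

theorem topOf_monochromaticSubtree_subset
    (hΓ : ∀ t ∈ nonmaxOf T, (sucSet X T t ∩ {x | Γ (t ++ [x]) = Γ t}).Nonempty) :
    topOf (monochromaticSubtree T Γ) ⊆ topOf T := by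
  intro t ht
  by_contra hnot
  obtain ⟨x, hx⟩ := hΓ t ⟨ht.1.1, hnot⟩
  rw [← sucSet_monochromaticSubtree ht.1] at hx
  simpa using ht.2 _ hx.2 (prefix_append t [x])

end Colouring

theorem homogeneous_subtree_general [Finite C] (hν : Cond1 X ν) (hC : Nat.card C ≤ Kfun X k)
    (hT : IsTreeOn X T) (htop : ∀ t ∈ topOf T, t.length ≤ n)
    (hroot : ∀ r, isRoot T r → k ≤ r.length) (Ψ : List α → C) :
    ∃ T' : Set (List α), T' ⊆ T ∧ IsTreeOn X T' ∧ topOf T' ⊆ topOf T ∧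
      (∃ c, ∀ t ∈ topOf T', Ψ t = c) ∧
      ∀ t ∈ nonmaxOf T', nuStar X ν T t - 1 ≤ nuStar X ν T' t := by
  obtain ⟨Γ, hΓtop, hΓnonmax⟩ := exists_colouring_of_isRobust_sucSet htop
    (fun t ht ↦ hT.isRobust_sucSet hν hC hroot ht) Ψ
  have htops : topOf (monochromaticSubtree T Γ) ⊆ topOf T :=
    topOf_monochromaticSubtree_subset fun t ht ↦ (hΓnonmax t ht).1
  refine ⟨monochromaticSubtree T Γ, monochromaticSubtree_subset,
    isTreeOn_monochromaticSubtree hT Γ, htops, ⟨Γ [], fun t ht ↦ ?_⟩, fun t ht ↦ ?_⟩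
  · rw [← hΓtop t (htops ht), colour_eq_of_mem_monochromaticSubtree ht.1]
  · rw [nuStar, nuStar, sucSet_monochromaticSubtree ht.1]
    exact (hΓnonmax t (nonmaxOf_subset_nonmaxOf monochromaticSubtree_subset ht)).2

end HomogeneousSubtree

/-- given Condition 1, any colouring of the top of a finite tree (whose maximal
nodes all have length `n` and whose root has length at least `k ≤ n`) by `K_k` colours admits a
monochromatic subtree losing at most 1 from each weak measure. -/
theorem homogeneous_subtree {α : Type*} (X : ℕ → Finset α) (hX : ∀ i, (X i).Nonempty)
    (ν : ℕ → Set α → ℕ) (hC1 : Cond1 X ν) (k n : ℕ) (hkn : k ≤ n)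
    (T : Set (List α)) (hfin : T.Finite) (htree : IsTreeOn X T)
    (htop : ∀ t ∈ topOf T, t.length = n)
    (hroot : ∀ r, isRoot T r → k ≤ r.length)
    (Ψ : List α → Fin (Kfun X k)) :
    ∃ T' : Set (List α), T' ⊆ T ∧ IsTreeOn X T' ∧ topOf T' ⊆ topOf T ∧
      (∃ c, ∀ t ∈ topOf T', Ψ t = c) ∧
      ∀ t ∈ nonmaxOf T', nuStar X ν T t - 1 ≤ nuStar X ν T' t :=
  homogeneous_subtree_general hC1 (Nat.card_fin _).le htree (fun t ht ↦ (htop t ht).le) hroot Ψ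
end

section
/- If 𝒯 is a k-simple tree of trees, then ℛ(k,𝒯) = {R_k(σ) : σ ∈ 𝒯}, with tsuc_{ℛ(k,𝒯)}(R_k(σ)) = tsuc_𝒯(σ)↾k for σ ∈ nonmax(𝒯), is a well-defined tree of trees such that hght*(ℛ(k,𝒯)) ≤ k. -/
open Set List

section TreesOfTrees

variable {α : Type*}

/-- A tree of trees: a finite tree `nodes` of finite sequences such that the set of immediate
successors of each non-maximal node `σ` is `Top(tsuc σ)` for a specified finite tree `tsuc σ`
which is a finite subtree of some member of `ℙ(X)`. -/
structure TreeOfTrees (X : ℕ → Finset α) (ν : ℕ → Set α → ℕ) where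
  nodes : Set (List (List α))
  tsuc : List (List α) → Set (List α)
  nodes_finite : nodes.Finite
  nodes_nonempty : nodes.Nonempty
  nodes_closed : ∀ t ∈ nodes, ∀ s, s <+: t → s ∈ nodes
  tsuc_subtree : ∀ σ ∈ nonmaxOf nodes, ∃ T, MemPP X ν T ∧ tsuc σ ⊆ T ∧
    (tsuc σ).Finite ∧ (tsuc σ).Nonempty ∧ ∀ t ∈ tsuc σ, ∀ s, s <+: t → s ∈ tsuc σ
  suc_eq : ∀ σ ∈ nonmaxOf nodes, {s | σ ++ [s] ∈ nodes} = topOf (tsuc σ)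

variable {X : ℕ → Finset α} {ν : ℕ → Set α → ℕ}

/-- `𝒯 ≺ 𝒮` for trees of trees. -/
def TTprec (T S : TreeOfTrees X ν) : Prop :=
  T.nodes ⊆ S.nodes ∧ topOf T.nodes ⊆ topOf S.nodes ∧
    ∀ σ ∈ nonmaxOf T.nodes, topOf (T.tsuc σ) ⊆ topOf (S.tsuc σ)

/-- `𝒯 ≺_f 𝒮` for trees of trees. -/
noncomputable def TTprecF (f : ℕ → ℕ → ℕ → ℕ) (T S : TreeOfTrees X ν) : Prop :=
  TTprec T S ∧ ∀ σ ∈ nonmaxOf T.nodes, ∀ t ∈ nonmaxOf (T.tsuc σ),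
    nuStar X ν (S.tsuc σ) t - f (hghtOf T.nodes) σ.length t.length ≤
      nuStar X ν (T.tsuc σ) t

/-- `R_k(σ)`, truncating each entry of `σ` to length `k`. -/
def Rfun (k : ℕ) (σ : List (List α)) : List (List α) := σ.map (fun s => s.take k)

/-- A tree of trees is `k`-simple if `tsuc σ ↾ k` depends only on `R_k(σ)`. -/
def kSimpleTT (k : ℕ) (T : TreeOfTrees X ν) : Prop :=
  ∀ σ ∈ nonmaxOf T.nodes, ∀ σ' ∈ nonmaxOf T.nodes,
    Rfun k σ = Rfun k σ' → restrOf (T.tsuc σ) k = restrOf (T.tsuc σ') k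

/-- `hght*(𝒯)`: the maximum of the heights of the trees `tsuc_𝒯(σ)`. -/
noncomputable def hghtStarTT (T : TreeOfTrees X ν) : ℕ :=
  sSup {n | ∃ σ ∈ nonmaxOf T.nodes, n = hghtOf (T.tsuc σ)}

/-- `hght_*(𝒯)`: the minimum of the heights of the trees `tsuc_𝒯(σ)`. -/
noncomputable def hghtLowTT (T : TreeOfTrees X ν) : ℕ :=
  sInf {n | ∃ σ ∈ nonmaxOf T.nodes, n = hghtOf (T.tsuc σ)}

/-- `sakne_*(𝒯)`: the minimum of the lengths of the roots of the trees `tsuc_𝒯(σ)`. -/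
noncomputable def sakneLowTT (T : TreeOfTrees X ν) : ℕ :=
  sInf {n | ∃ σ ∈ nonmaxOf T.nodes, ∃ r, isRoot (T.tsuc σ) r ∧ n = r.length}

/-- `ν_*(𝒯)`: the minimum of `ν**_{tsuc_𝒯(σ)}(t)` over non-maximal `σ` and non-maximal
`t ∈ tsuc_𝒯(σ)` which are not initial segments of the root of `tsuc_𝒯(σ)`. -/
noncomputable def nuLowTT (T : TreeOfTrees X ν) : ℕ :=
  sInf {q | ∃ σ ∈ nonmaxOf T.nodes, ∃ t ∈ nonmaxOf (T.tsuc σ),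
    (∀ r, isRoot (T.tsuc σ) r → ¬ t <+: r) ∧ q = nuStarStar X ν (T.tsuc σ) t}

end TreesOfTrees

/-! A one-step extension in `{R_k(σ) : σ ∈ 𝒯}` is the image of a one-step extension in `𝒯`, and in
a finite tree `T` the maximal elements of `T↾k` are the truncations to length `k` of the maximal
elements of `T`. So the immediate successors of `R_k(σ)` are the maximal elements of the trees
`tsuc(τ)↾k` with `R_k(τ) = R_k(σ)`, and `k`-simplicity says that these trees are all equal to
`tsuc(σ)↾k`. -/

section PrefixClosed

variable {β γ : Type*} {T : Set (List β)}

/-- Closure of a set of sequences under initial segments: the defining condition of a tree, apart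
from nonemptiness and the choice of alphabet. -/
def PrefixClosed (T : Set (List β)) : Prop := ∀ t ∈ T, ∀ s, s <+: t → s ∈ T

theorem PrefixClosed.take_mem (hT : PrefixClosed T) {t : List β} (ht : t ∈ T) (n : ℕ) :
    t.take n ∈ T :=
  hT t ht _ (take_prefix n t)

theorem PrefixClosed.nil_mem (hT : PrefixClosed T) (hne : T.Nonempty) : [] ∈ T :=
  let ⟨t, ht⟩ := hne
  hT t ht [] nil_prefix

protected theorem PrefixClosed.restrOf (hT : PrefixClosed T) (k : ℕ) : PrefixClosed (restrOf T k) :=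
  fun t ht s hst => ⟨hT t ht.1 s hst, hst.length_le.trans ht.2⟩

theorem PrefixClosed.image_map (hT : PrefixClosed T) (f : β → γ) :
    PrefixClosed (List.map f '' T) := by
  rintro _ ⟨t, ht, rfl⟩ s hs
  refine ⟨t.take s.length, hT.take_mem ht _, ?_⟩
  rw [map_take, ← prefix_iff_eq_take.mp hs]

theorem PrefixClosed.mem_nonmaxOf_iff (hT : PrefixClosed T) {t : List β} :
    t ∈ nonmaxOf T ↔ ∃ x, t ++ [x] ∈ T := by
  constructor
  · rintro ⟨ht, hmax⟩
    obtain ⟨s, hs, hts, hne⟩ : ∃ s ∈ T, t <+: s ∧ s ≠ t := by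
      by_contra! h
      exact hmax ⟨ht, h⟩
    obtain ⟨_ | ⟨x, u⟩, rfl⟩ := hts
    · exact absurd (append_nil t) hne
    · exact ⟨x, hT _ hs _ ⟨u, by simp⟩⟩
  · rintro ⟨x, hx⟩
    refine ⟨hT _ hx t (prefix_append t [x]), fun hmax => ?_⟩
    simpa using hmax.2 _ hx (prefix_append t [x])

theorem append_singleton_mem_image_map_iff {f : β → γ} {s : List γ} {y : γ} :
    s ++ [y] ∈ List.map f '' T ↔ ∃ t x, t ++ [x] ∈ T ∧ t.map f = s ∧ f x = y := by
  constructor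
  · rintro ⟨_, hu, hmap⟩
    obtain ⟨t, v, rfl, ht, hv⟩ := map_eq_append_iff.mp hmap
    obtain ⟨x, rfl, hx⟩ := map_eq_singleton_iff.mp hv
    exact ⟨t, x, hu, ht, hx⟩
  · rintro ⟨t, x, hx, rfl, rfl⟩
    exact ⟨t ++ [x], hx, by simp⟩

theorem PrefixClosed.nonmaxOf_image_map (hT : PrefixClosed T) (f : β → γ) :
    nonmaxOf (List.map f '' T) = List.map f '' nonmaxOf T := by
  ext s
  rw [(hT.image_map f).mem_nonmaxOf_iff]
  constructor
  · rintro ⟨y, hy⟩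
    obtain ⟨t, x, hx, rfl, -⟩ := append_singleton_mem_image_map_iff.mp hy
    exact ⟨t, hT.mem_nonmaxOf_iff.mpr ⟨x, hx⟩, rfl⟩
  · rintro ⟨t, ht, rfl⟩
    obtain ⟨x, hx⟩ := hT.mem_nonmaxOf_iff.mp ht
    exact ⟨f x, append_singleton_mem_image_map_iff.mpr ⟨t, x, hx, rfl, rfl⟩⟩

theorem exists_mem_topOf_prefix (hfin : T.Finite) {t : List β} (ht : t ∈ T) :
    ∃ u ∈ topOf T, t <+: u := by
  obtain ⟨u, ⟨hu, htu⟩, hlongest⟩ := exists_max_image {u | u ∈ T ∧ t <+: u} List.length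
    (hfin.subset fun u hu => hu.1) ⟨t, ht, prefix_rfl⟩
  refine ⟨u, ⟨hu, fun v hv huv => ?_⟩, htu⟩
  exact (huv.eq_of_length_le (hlongest v ⟨hv, htu.trans huv⟩)).symm

theorem PrefixClosed.topOf_restrOf (hT : PrefixClosed T) (hfin : T.Finite) (k : ℕ) :
    topOf (restrOf T k) = List.take k '' topOf T := by
  have take_mem_restrOf {u : List β} (hu : u ∈ T) : u.take k ∈ restrOf T k :=
    ⟨hT.take_mem hu k, length_take_le k u⟩
  ext s
  constructor
  · rintro ⟨⟨hs, hsk⟩, hmax⟩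
    obtain ⟨u, hu, hsu⟩ := exists_mem_topOf_prefix hfin hs
    exact ⟨u, hu, hmax _ (take_mem_restrOf hu.1) (prefix_take_iff.mpr ⟨hsu, hsk⟩)⟩
  · rintro ⟨u, hu, rfl⟩
    refine ⟨take_mem_restrOf hu.1, fun v ⟨hv, hvk⟩ huv => ?_⟩
    obtain hshort | hlong := le_total u.length k
    · rw [take_of_length_le hshort] at huv ⊢
      exact hu.2 v hv huv
    · refine (huv.eq_of_length_le ?_).symm
      rwa [length_take_of_le hlong]

theorem hghtOf_restrOf_le (T : Set (List β)) (k : ℕ) : hghtOf (restrOf T k) ≤ k :=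
  csSup_le' (forall_mem_image.mpr fun _ ht => ht.2)

end PrefixClosed

namespace TreeOfTrees

variable {α : Type*} {X : ℕ → Finset α} {ν : ℕ → Set α → ℕ} {𝒯 : TreeOfTrees X ν} {k : ℕ}
  {σ : List (List α)}

theorem prefixClosed_nodes (𝒯 : TreeOfTrees X ν) : PrefixClosed 𝒯.nodes :=
  𝒯.nodes_closed

theorem prefixClosed_tsuc (hσ : σ ∈ nonmaxOf 𝒯.nodes) : PrefixClosed (𝒯.tsuc σ) :=
  let ⟨_, _, _, _, _, hclosed⟩ := 𝒯.tsuc_subtree σ hσ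
  hclosed

theorem nonmaxOf_image_Rfun (𝒯 : TreeOfTrees X ν) (k : ℕ) :
    nonmaxOf (Rfun k '' 𝒯.nodes) = Rfun k '' nonmaxOf 𝒯.nodes :=
  𝒯.prefixClosed_nodes.nonmaxOf_image_map (List.take k)

theorem topOf_restrOf_tsuc (hσ : σ ∈ nonmaxOf 𝒯.nodes) (k : ℕ) :
    topOf (restrOf (𝒯.tsuc σ) k) = List.take k '' {s | σ ++ [s] ∈ 𝒯.nodes} := by
  obtain ⟨-, -, -, hfin, -⟩ := 𝒯.tsuc_subtree σ hσ
  rw [𝒯.suc_eq σ hσ, (prefixClosed_tsuc hσ).topOf_restrOf hfin]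

theorem restrOf_tsuc_subtree (hσ : σ ∈ nonmaxOf 𝒯.nodes) (k : ℕ) :
    ∃ T, MemPP X ν T ∧ restrOf (𝒯.tsuc σ) k ⊆ T ∧ (restrOf (𝒯.tsuc σ) k).Finite ∧
      (restrOf (𝒯.tsuc σ) k).Nonempty ∧ PrefixClosed (restrOf (𝒯.tsuc σ) k) := by
  obtain ⟨T, hT, hsub, hfin, hne, -⟩ := 𝒯.tsuc_subtree σ hσ
  have hrestr : restrOf (𝒯.tsuc σ) k ⊆ 𝒯.tsuc σ := fun _ ht => ht.1
  exact ⟨T, hT, hrestr.trans hsub, hfin.subset hrestr,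
    ⟨[], (prefixClosed_tsuc hσ).nil_mem hne, k.zero_le⟩, (prefixClosed_tsuc hσ).restrOf k⟩

theorem suc_image_Rfun (hsim : kSimpleTT k 𝒯) (hσ : σ ∈ nonmaxOf 𝒯.nodes) :
    {s | Rfun k σ ++ [s] ∈ Rfun k '' 𝒯.nodes} = topOf (restrOf (𝒯.tsuc σ) k) := by
  ext s
  constructor
  · intro hs
    obtain ⟨τ, u, hu, hτσ, rfl⟩ := append_singleton_mem_image_map_iff.mp hs
    have hτ : τ ∈ nonmaxOf 𝒯.nodes := 𝒯.prefixClosed_nodes.mem_nonmaxOf_iff.mpr ⟨u, hu⟩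
    rw [← hsim τ hτ σ hσ hτσ, topOf_restrOf_tsuc hτ]
    exact mem_image_of_mem _ hu
  · rw [topOf_restrOf_tsuc hσ]
    rintro ⟨u, hu, rfl⟩
    exact append_singleton_mem_image_map_iff.mpr ⟨σ, u, hu, rfl, rfl⟩

/-- The tree `tsuc_{ℛ(k,𝒯)}(ρ)`. The union over all non-maximal `σ` with `R_k(σ) = ρ` avoids
choosing a representative of `ρ`; for `k`-simple `𝒯` its members all coincide. -/
def collapseTsuc (𝒯 : TreeOfTrees X ν) (k : ℕ) (ρ : List (List α)) : Set (List α) :=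
  {t | ∃ σ ∈ nonmaxOf 𝒯.nodes, Rfun k σ = ρ ∧ t ∈ restrOf (𝒯.tsuc σ) k}

theorem collapseTsuc_Rfun (hsim : kSimpleTT k 𝒯) (hσ : σ ∈ nonmaxOf 𝒯.nodes) :
    𝒯.collapseTsuc k (Rfun k σ) = restrOf (𝒯.tsuc σ) k := by
  ext t
  constructor
  · rintro ⟨τ, hτ, hτσ, ht⟩
    rwa [← hsim τ hτ σ hσ hτσ]
  · exact fun ht => ⟨σ, hσ, rfl, ht⟩

/-- The collapse `ℛ(k,𝒯)` of a `k`-simple tree of trees. -/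
def collapse (𝒯 : TreeOfTrees X ν) (k : ℕ) (hsim : kSimpleTT k 𝒯) : TreeOfTrees X ν where
  nodes := Rfun k '' 𝒯.nodes
  tsuc := 𝒯.collapseTsuc k
  nodes_finite := 𝒯.nodes_finite.image _
  nodes_nonempty := 𝒯.nodes_nonempty.image _
  nodes_closed := 𝒯.prefixClosed_nodes.image_map (List.take k)
  tsuc_subtree := by
    rw [nonmaxOf_image_Rfun, forall_mem_image]
    intro σ hσ
    rw [collapseTsuc_Rfun hsim hσ]
    exact restrOf_tsuc_subtree hσ k
  suc_eq := by
    rw [nonmaxOf_image_Rfun, forall_mem_image]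
    intro σ hσ
    rw [collapseTsuc_Rfun hsim hσ, suc_image_Rfun hsim hσ]

theorem hghtStarTT_collapse_le (hsim : kSimpleTT k 𝒯) : hghtStarTT (𝒯.collapse k hsim) ≤ k := by
  refine csSup_le' ?_
  rintro _ ⟨ρ, hρ, rfl⟩
  obtain ⟨σ, hσ, rfl⟩ : ρ ∈ Rfun k '' nonmaxOf 𝒯.nodes := 𝒯.nonmaxOf_image_Rfun k ▸ hρ
  calc hghtOf (𝒯.collapseTsuc k (Rfun k σ))
      = hghtOf (restrOf (𝒯.tsuc σ) k) := by rw [collapseTsuc_Rfun hsim hσ]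
    _ ≤ k := hghtOf_restrOf_le _ k

end TreeOfTrees

/-- for a `k`-simple tree of trees `𝒯`, the collapse
`ℛ(k,𝒯) = {R_k(σ) : σ ∈ 𝒯}` with `tsuc_{ℛ(k,𝒯)}(R_k(σ)) = tsuc_𝒯(σ)↾k` is a well-defined
tree of trees with `hght*(ℛ(k,𝒯)) ≤ k`. -/
theorem collapse_is_treeOfTrees {α : Type*} (X : ℕ → Finset α) (hX : ∀ i, (X i).Nonempty)
    (ν : ℕ → Set α → ℕ) (𝒯 : TreeOfTrees X ν) (k : ℕ) (hsim : kSimpleTT k 𝒯) :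
    ∃ ℛ : TreeOfTrees X ν,
      ℛ.nodes = Rfun k '' 𝒯.nodes ∧
      (∀ σ ∈ nonmaxOf 𝒯.nodes, ℛ.tsuc (Rfun k σ) = restrOf (𝒯.tsuc σ) k) ∧
      hghtStarTT ℛ ≤ k :=
  ⟨𝒯.collapse k hsim, rfl, fun _ hσ => TreeOfTrees.collapseTsuc_Rfun hsim hσ,
    TreeOfTrees.hghtStarTT_collapse_le hsim⟩
end

section
/- Let m ≥ 1 and let 𝒬_m be the family of m² closed squares [i/m, (i+1)/m] × [j/m, (j+1)/m] for 0 ≤ i, j < m, which covers the unit square [0,1]². If γ is a rectifiable curve in ℝ² (with the Euclidean metric) of length λ(γ) < 1, then the number of squares Q ∈ 𝒬_m with Q ∩ image(γ) ≠ ∅ is at most 5m. -/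
/-!
Cut a path of variation less than `n * δ` into `n` pieces according to the integer part of the
variation accumulated so far, divided by `δ`. Two points of the same piece are at distance less
than `δ`. Closed cubes of the grid of side `δ` whose indices agree modulo `2` in every coordinate
are equal or at distance at least `δ`, so each piece meets at most one cube in each of the
`2 ^ d` parity classes. In the plane this gives `4 * m` squares.
-/

open Set Metric ENNReal

/-- A curve in a metric space: a continuous injective function on `[0,1]`. -/
def IsCurve {X : Type*} [MetricSpace X] (γ : ℝ → X) : Prop :=
  ContinuousOn γ (Set.Icc 0 1) ∧ Set.InjOn γ (Set.Icc 0 1)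

/-- The image of a curve. -/
def curveImage {X : Type*} [MetricSpace X] (γ : ℝ → X) : Set X :=
  γ '' Set.Icc 0 1

/-- The length of a curve: the total variation on `[0,1]`. -/
noncomputable def curveLength {X : Type*} [MetricSpace X] (γ : ℝ → X) : ℝ≥0∞ :=
  eVariationOn γ (Set.Icc 0 1)

/-- The length of an arbitrary set: the infimum of lengths of curves whose image contains it
(`∞` if there is no such curve). -/
noncomputable def setLength {X : Type*} [MetricSpace X] (A : Set X) : ℝ≥0∞ :=
  ⨅ (γ : ℝ → X) (_ : IsCurve γ ∧ A ⊆ curveImage γ), curveLength γ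

/-- A metric space is reasonably geodesic if any two points of an open ball are contained in a
short curve inside the ball avoiding any prescribed set of finite length. -/
def ReasonablyGeodesic (Y : Type*) [MetricSpace Y] : Prop :=
  ∀ x y z : Y, ∀ ε : ℝ, 0 < ε → x ∈ Metric.ball z ε → y ∈ Metric.ball z ε →
    ∀ δ : ℝ, 0 < δ → ∀ W : Set Y, setLength W < ⊤ →
      ∃ γ : ℝ → Y, IsCurve γ ∧ ({x, y} : Set Y) ⊆ curveImage γ ∧
        curveImage γ ⊆ Metric.ball z ε ∧ curveImage γ ∩ W = ∅ ∧
        curveLength γ < ENNReal.ofReal (dist x y + δ)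

open scoped NNReal

section Variation

variable {α E : Type*} [LinearOrder α] [PseudoEMetricSpace E] {f : α → E} {s : Set α}

lemma eVariationOn_inter_Iic_add_edist_le {x y : α} (hx : x ∈ s) (hy : y ∈ s) (hxy : x ≤ y) :
    eVariationOn f (s ∩ Iic x) + edist (f x) (f y) ≤ eVariationOn f (s ∩ Iic y) :=
  calc
    _ ≤ eVariationOn f (s ∩ Iic x) + eVariationOn f (s ∩ Icc x y) := by
        gcongr
        exact eVariationOn.edist_le f ⟨hx, left_mem_Icc.2 hxy⟩ ⟨hy, right_mem_Icc.2 hxy⟩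
    _ ≤ eVariationOn f (s ∩ Iic x ∪ s ∩ Icc x y) :=
        eVariationOn.add_le_union f fun _ ha _ hb ↦ ha.2.trans hb.2.1
    _ = eVariationOn f (s ∩ Iic y) := by
        rw [← inter_union_distrib_left, Iic_union_Icc_eq_Iic hxy]

theorem exists_fin_coloring_edist_lt_of_eVariationOn_lt {n : ℕ} {δ : ℝ≥0}
    (hf : eVariationOn f s < n * δ) :
    ∃ c : s → Fin n, ∀ x y : s, c x = c y → edist (f x) (f y) < δ := by
  have hδ : 0 < δ := pos_iff_ne_zero.2 fun h ↦ by simp [h] at hf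
  have hlt (x : s) : eVariationOn f (s ∩ Iic x) < (n * δ : ℝ≥0) := by
    simpa using (eVariationOn.mono f inter_subset_left).trans_lt hf
  choose v hv hvn using fun x ↦ ENNReal.lt_iff_exists_coe.1 (hlt x)
  have hfloor (x : s) : ⌊v x / δ⌋₊ < n := by
    rw [Nat.floor_lt zero_le, div_lt_iff₀ hδ]
    exact ENNReal.coe_lt_coe.1 (hvn x)
  refine ⟨fun x ↦ ⟨⌊v x / δ⌋₊, hfloor x⟩, fun x y hxy ↦ ?_⟩
  wlog h : x ≤ y generalizing x y
  · rw [edist_comm]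
    exact this y x hxy.symm (le_of_not_ge h)
  have hvlt : v y < v x + δ := by
    have : v y / δ < v x / δ + 1 :=
      (Nat.lt_floor_add_one _).trans_le <| by
        rw [← Fin.mk.inj hxy]
        gcongr
        exact Nat.floor_le zero_le
    rwa [← div_self hδ.ne', ← add_div, div_lt_div_iff_of_pos_right hδ] at this
  have hadd : v x + edist (f x) (f y) < v x + δ :=
    calc
      _ ≤ (v y : ℝ≥0∞) := by
          rw [← hv, ← hv]
          exact eVariationOn_inter_Iic_add_edist_le x.2 y.2 h
      _ < v x + δ := mod_cast hvlt
  exact lt_of_add_lt_add_left hadd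

end Variation

lemma eVariationOn_ofLp_comp_le {α ι : Type*} [LinearOrder α] [Fintype ι] {β : ι → Type*}
    [∀ i, PseudoEMetricSpace (β i)] {p : ℝ≥0∞} [Fact (1 ≤ p)] (f : α → PiLp p β) (s : Set α) :
    eVariationOn (WithLp.ofLp ∘ f) s ≤ eVariationOn f s := by
  simpa using (PiLp.lipschitzWith_ofLp p β).lipschitzOnWith.comp_eVariationOn_le (mapsTo_univ f s)

section GridCube

variable {ι : Type*}

/-- The closed cube of side `δ` with lower corner `δ • k`, the analogue in `ι → ℝ` of the squares of
the planar grid. It lives in `ι → ℝ` rather than in `EuclideanSpace ℝ ι` because only the supremum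
distance matters. -/
def gridCube (δ : ℝ) (k : ι → ℤ) : Set (ι → ℝ) :=
  Icc (fun i ↦ δ * k i) (fun i ↦ δ * (k i + 1))

lemma eq_of_mem_Icc_of_abs_sub_lt_of_modEq {δ x y : ℝ} {a b : ℤ}
    (hx : x ∈ Icc (δ * a) (δ * (a + 1))) (hy : y ∈ Icc (δ * b) (δ * (b + 1)))
    (hxy : |x - y| < δ) (hab : a ≡ b [ZMOD 2]) : a = b := by
  have hδ : 0 < δ := (abs_nonneg _).trans_lt hxy
  obtain ⟨hlt, hgt⟩ := abs_lt.1 hxy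
  have hba_lt : b < a + 2 := by
    have : (b : ℝ) < a + 2 := lt_of_mul_lt_mul_left (by linarith [hx.2, hy.1]) hδ.le
    exact_mod_cast this
  have hab_lt : a < b + 2 := by
    have : (a : ℝ) < b + 2 := lt_of_mul_lt_mul_left (by linarith [hx.1, hy.2]) hδ.le
    exact_mod_cast this
  grind [Int.ModEq]

variable [Fintype ι]

lemma eq_of_mem_gridCube_of_dist_lt {δ : ℝ} {k l : ι → ℤ} {x y : ι → ℝ}
    (hx : x ∈ gridCube δ k) (hy : y ∈ gridCube δ l) (hxy : dist x y < δ)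
    (hkl : ∀ i, k i ≡ l i [ZMOD 2]) : k = l :=
  funext fun i ↦ eq_of_mem_Icc_of_abs_sub_lt_of_modEq ⟨hx.1 i, hx.2 i⟩ ⟨hy.1 i, hy.2 i⟩
    ((dist_le_pi_dist x y i).trans_lt hxy) (hkl i)

theorem curve_meets_few_grid_squares_general {α : Type*} [LinearOrder α] {f : α → ι → ℝ}
    {s : Set α} {n : ℕ} {δ : ℝ≥0} (hf : eVariationOn f s < n * δ) :
    {k : ι → ℤ | (gridCube δ k ∩ f '' s).Nonempty}.encard ≤ n * 2 ^ Fintype.card ι := by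
  classical
  obtain ⟨c, hc⟩ := exists_fin_coloring_edist_lt_of_eVariationOn_lt hf
  have hpoint (k : {k : ι → ℤ | (gridCube δ k ∩ f '' s).Nonempty}) :
      ∃ x : s, f x ∈ gridCube δ k.1 := by
    obtain ⟨_, hk, x, hx, rfl⟩ := k.2
    exact ⟨⟨x, hx⟩, hk⟩
  choose x hx using hpoint
  have hinj : Function.Injective
      fun k ↦ ((c (x k), fun i ↦ (k.1 i : ZMod 2)) : Fin n × (ι → ZMod 2)) := by
    intro k l hkl
    obtain ⟨hcolor, hparity⟩ := Prod.mk.inj hkl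
    have hdist : dist (f (x k)) (f (x l)) < δ := edist_lt_coe.1 (hc _ _ hcolor)
    exact Subtype.ext <| eq_of_mem_gridCube_of_dist_lt (hx k) (hx l) hdist fun i ↦
      (ZMod.intCast_eq_intCast_iff _ _ _).1 (congrFun hparity i)
  calc
    _ ≤ ENat.card (Fin n × (ι → ZMod 2)) := ENat.card_le_card_of_injective hinj
    _ = n * 2 ^ Fintype.card ι := by simp [ENat.card_eq_coe_fintype_card, ZMod.card]

end GridCube

lemma encard_grid_squares_le_encard_gridCubes (m : ℕ) (A : Set (EuclideanSpace ℝ (Fin 2))) :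
    {p : Fin m × Fin m | ∃ z ∈ A,
        z 0 ∈ Icc ((p.1 : ℝ) / m) (((p.1 : ℝ) + 1) / m) ∧
        z 1 ∈ Icc ((p.2 : ℝ) / m) (((p.2 : ℝ) + 1) / m)}.encard ≤
      {k : Fin 2 → ℤ | (gridCube (m : ℝ)⁻¹ k ∩ WithLp.ofLp '' A).Nonempty}.encard := by
  refine encard_le_encard_of_injOn (f := fun p ↦ ![(p.1 : ℤ), (p.2 : ℤ)]) ?_ ?_
  · rintro p ⟨z, hz, h₀, h₁⟩
    refine ⟨z, ?_, z, hz, rfl⟩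
    simpa [gridCube, Pi.le_def, Fin.forall_fin_two, div_eq_inv_mul, and_and_and_comm]
      using And.intro h₀ h₁
  · rintro ⟨i, j⟩ - ⟨i', j'⟩ - h
    simpa [Fin.ext_iff] using h

/-- A rectifiable curve in the Euclidean plane of length less than 1 meets at
most `5m` of the `m²` closed grid squares of side `1/m` covering the unit square. -/
theorem curve_meets_few_grid_squares (m : ℕ) (hm : 1 ≤ m)
    (γ : ℝ → EuclideanSpace ℝ (Fin 2)) (hγ : IsCurve γ) (hlen : curveLength γ < 1) :
    {p : Fin m × Fin m | ∃ z ∈ curveImage γ,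
        z 0 ∈ Set.Icc ((p.1 : ℝ) / m) (((p.1 : ℝ) + 1) / m) ∧
        z 1 ∈ Set.Icc ((p.2 : ℝ) / m) (((p.2 : ℝ) + 1) / m)}.ncard ≤ 5 * m := by
  have hvar : eVariationOn (WithLp.ofLp ∘ γ) (Icc 0 1) < m * ((m : ℝ≥0)⁻¹ : ℝ≥0) :=
    calc
      _ ≤ curveLength γ := eVariationOn_ofLp_comp_le γ _
      _ < 1 := hlen
      _ = m * ((m : ℝ≥0)⁻¹ : ℝ≥0) := by
          norm_cast
          exact (mul_inv_cancel₀ (by positivity)).symm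
  have hcubes := curve_meets_few_grid_squares_general hvar
  rw [image_comp, NNReal.coe_inv, NNReal.coe_natCast, Fintype.card_fin] at hcubes
  rw [← Nat.cast_le (α := ℕ∞), (toFinite _).cast_ncard_eq]
  calc
    _ ≤ {k | (gridCube (m : ℝ)⁻¹ k ∩ WithLp.ofLp '' curveImage γ).Nonempty}.encard :=
        encard_grid_squares_le_encard_gridCubes m _
    _ ≤ m * 2 ^ 2 := hcubes
    _ ≤ (5 * m : ℕ) := by
        norm_cast
        lia
end

section
/- Let f, g : ℕ → ℕ satisfy f(0) = 5, g(0) = 1, f(n) ≥ 1, f(n) divides f(n+1), and f(n+1)/f(n)² > 5·g(n+1) for all n. For each n let S_n be a subfamily of the grid 𝒬_{f(n)} with |S_n| < 5·f(n)·g(n). Then there is a nested sequence of squares Q_0 ⊇ Q_1 ⊇ Q_2 ⊇ … with Q_n ∈ 𝒬_{f(n)} \ S_n for every n; in particular there is a point x ∈ [0,1]² such that x does not belong to any square in ⋃_{n∈ℕ} S_n. -/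
open Set

/-- The closed square `[i/m,(i+1)/m] × [j/m,(j+1)/m]` of the grid `𝒬_m`. -/
def gridSq (m i j : ℕ) : Set (ℝ × ℝ) :=
  Set.Icc ((i : ℝ) / m) (((i : ℝ) + 1) / m) ×ˢ Set.Icc ((j : ℝ) / m) (((j : ℝ) + 1) / m)

/-!
Let `k = f (n + 1) / f n`. The growth condition gives `|S (n + 1)| < k * (k - 1)`, and
`k * (k - 1)` is the number of squares of the grid `𝒬_{f (n + 1)}` that lie in a given square of
`𝒬_{f n}` and do not touch a prescribed side of it. So `Q (n + 1)` can be chosen in `Q n`, outside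
`S (n + 1)` and off any one side of `Q n`. Cycling through the four sides, the point `x` common to
all the `Q n` lies in the interior of every `Q n`, hence in no other closed square of `𝒬_{f n}`.
-/

lemma lt_of_monotone_of_frequently_lt_succ {α : Type*} [Preorder α] {u : ℕ → α} {x : α}
    (hu : Monotone u) (hlt : ∃ᶠ n in Filter.atTop, u n < u (n + 1)) (hx : ∀ n, u n ≤ x) (n : ℕ) :
    u n < x := by
  obtain ⟨m, hnm, hm⟩ := hlt.forall_exists_of_atTop n
  exact (hu hnm).trans_lt (hm.trans_le (hx _))

lemma lt_of_antitone_of_frequently_succ_lt {α : Type*} [Preorder α] {u : ℕ → α} {x : α}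
    (hu : Antitone u) (hlt : ∃ᶠ n in Filter.atTop, u (n + 1) < u n) (hx : ∀ n, x ≤ u n) (n : ℕ) :
    x < u n :=
  lt_of_monotone_of_frequently_lt_succ (α := αᵒᵈ) hu.dual_right hlt hx n

lemma frequently_fin_ofNat_eq {N : ℕ} [NeZero N] (s : Fin N) :
    ∃ᶠ n in Filter.atTop, Fin.ofNat N n = s :=
  (Nat.frequently_mod_eq s.isLt).mono fun _ hn => Fin.ext hn

lemma lt_mul_pred_of_growth {C c g k m : ℕ} (hc : c < C * (m * k) * g)
    (hgrow : C * g * m ^ 2 < m * k) : c < k * (k - 1) := by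
  have hk : C * m * g < k := lt_of_mul_lt_mul_left (a := m) (by linarith) m.zero_le
  calc c < C * (m * k) * g := hc
    _ = k * (C * m * g) := by ring
    _ ≤ k * (k - 1) := Nat.mul_le_mul_left k (Nat.le_pred_of_lt hk)

section Subdivision

variable {m k i j : ℕ}

lemma div_le_div_mul_iff (hm : 0 < m) (hk : 0 < k) :
    (i : ℝ) / m ≤ (j : ℝ) / (m * k : ℕ) ↔ k * i ≤ j := by
  rw [div_le_div_iff₀ (by positivity) (by positivity)]
  norm_cast
  rw [mul_left_comm, mul_comm j, Nat.mul_le_mul_left_iff hm, mul_comm]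

lemma div_mul_le_div_iff (hm : 0 < m) (hk : 0 < k) :
    (j : ℝ) / (m * k : ℕ) ≤ (i : ℝ) / m ↔ j ≤ k * i := by
  rw [div_le_div_iff₀ (by positivity) (by positivity)]
  norm_cast
  rw [mul_left_comm, mul_comm j, Nat.mul_le_mul_left_iff hm, mul_comm i]

lemma div_lt_div_mul_iff (hm : 0 < m) (hk : 0 < k) :
    (i : ℝ) / m < (j : ℝ) / (m * k : ℕ) ↔ k * i < j :=
  lt_iff_lt_of_le_iff_le (div_mul_le_div_iff hm hk)

lemma div_mul_lt_div_iff (hm : 0 < m) (hk : 0 < k) :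
    (j : ℝ) / (m * k : ℕ) < (i : ℝ) / m ↔ j < k * i :=
  lt_iff_lt_of_le_iff_le (div_le_div_mul_iff hm hk)

lemma eq_of_mem_Ioo_div_of_mem_Icc_div {y : ℝ} (hi : y ∈ Ioo ((i : ℝ) / m) ((i + 1) / m))
    (hj : y ∈ Icc ((j : ℝ) / m) ((j + 1) / m)) : i = j := by
  have hij : (i : ℝ) < j + 1 := lt_of_not_ge fun h =>
    (hi.1.trans_le hj.2).not_ge (div_le_div_of_nonneg_right h m.cast_nonneg)
  have hji : (j : ℝ) < i + 1 := lt_of_not_ge fun h =>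
    (hj.1.trans_lt hi.2).not_ge (div_le_div_of_nonneg_right h m.cast_nonneg)
  norm_cast at hij hji
  lia

end Subdivision

lemma mem_Ioo_div_of_frequently {f k a : ℕ → ℕ} {y : ℝ} (hf : ∀ n, f (n + 1) = f n * k n)
    (hfpos : ∀ n, 0 < f n)
    (ha : ∀ n, k n * a n ≤ a (n + 1) ∧ a (n + 1) + 1 ≤ k n * (a n + 1))
    (hleft : ∃ᶠ n in Filter.atTop, k n * a n < a (n + 1))
    (hright : ∃ᶠ n in Filter.atTop, a (n + 1) + 1 < k n * (a n + 1))
    (hy : ∀ n, y ∈ Icc ((a n : ℝ) / f n) ((a n + 1) / f n)) (n : ℕ) :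
    y ∈ Ioo ((a n : ℝ) / f n) ((a n + 1) / f n) := by
  have hkpos (n) : 0 < k n := Nat.pos_of_mul_pos_right ((a (n + 1)).succ_pos.trans_le (ha n).2)
  have hmono : Monotone fun n => (a n : ℝ) / f n := monotone_nat_of_le_succ fun n => by
    rw [hf]; exact (div_le_div_mul_iff (hfpos n) (hkpos n)).2 (ha n).1
  have hanti : Antitone fun n => ((a n + 1 : ℕ) : ℝ) / f n := antitone_nat_of_succ_le fun n => by
    rw [hf]; exact (div_mul_le_div_iff (hfpos n) (hkpos n)).2 (ha n).2
  refine ⟨lt_of_monotone_of_frequently_lt_succ hmono (hleft.mono fun n hn => ?_)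
    (fun n => (hy n).1) n, ?_⟩
  · rw [hf]; exact (div_lt_div_mul_iff (hfpos n) (hkpos n)).2 hn
  · have hlt := lt_of_antitone_of_frequently_succ_lt hanti (hright.mono fun n hn => ?_)
      (fun n => by exact_mod_cast (hy n).2) n
    · exact_mod_cast hlt
    · rw [hf]; exact (div_mul_lt_div_iff (hfpos n) (hkpos n)).2 hn

section GridSq

variable {m i j i' j' : ℕ}

lemma gridSq_nonempty : (gridSq m i j).Nonempty :=
  .prod (nonempty_Icc.2 (by gcongr; linarith)) (nonempty_Icc.2 (by gcongr; linarith))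

lemma isCompact_gridSq : IsCompact (gridSq m i j) :=
  isCompact_Icc.prod isCompact_Icc

lemma interior_gridSq : interior (gridSq m i j) =
    Ioo ((i : ℝ) / m) ((i + 1) / m) ×ˢ Ioo ((j : ℝ) / m) ((j + 1) / m) := by
  rw [gridSq, interior_prod_eq, interior_Icc, interior_Icc]

lemma eq_of_mem_interior_gridSq_of_mem_gridSq {x : ℝ × ℝ} (hx : x ∈ interior (gridSq m i j))
    (hx' : x ∈ gridSq m i' j') : (i, j) = (i', j') := by
  rw [interior_gridSq] at hx
  exact Prod.ext (eq_of_mem_Ioo_div_of_mem_Icc_div hx.1 hx'.1)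
    (eq_of_mem_Ioo_div_of_mem_Icc_div hx.2 hx'.2)

lemma Icc_div_subset_Icc_zero_one (hi : i < m) :
    Icc ((i : ℝ) / m) ((i + 1) / m) ⊆ Icc 0 1 :=
  Icc_subset_Icc (by positivity) (div_le_one_of_le₀ (by exact_mod_cast hi) m.cast_nonneg)

lemma gridSq_subset_unitSquare (hi : i < m) (hj : j < m) :
    gridSq m i j ⊆ Icc 0 1 ×ˢ Icc 0 1 :=
  prod_mono (Icc_div_subset_Icc_zero_one hi) (Icc_div_subset_Icc_zero_one hj)

end GridSq

/-- The indices of the squares of `𝒬_{m k}` contained in the square of `𝒬_m` with index `p`; they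
do not depend on `m`. -/
def subsquares (k : ℕ) (p : ℕ × ℕ) : Finset (ℕ × ℕ) :=
  Finset.Ico (k * p.1) (k * (p.1 + 1)) ×ˢ Finset.Ico (k * p.2) (k * (p.2 + 1))

/-- The indices in `subsquares k p` of the squares that do not touch the side `s` of the square `p`,
where `0`, `1`, `2`, `3` stand for the left, right, bottom and top side. -/
def subsquaresOffSide (k : ℕ) (p : ℕ × ℕ) : Fin 4 → Finset (ℕ × ℕ)
  | 0 => Finset.Ioo (k * p.1) (k * (p.1 + 1)) ×ˢ Finset.Ico (k * p.2) (k * (p.2 + 1))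
  | 1 => Finset.Ico (k * p.1) (k * (p.1 + 1) - 1) ×ˢ Finset.Ico (k * p.2) (k * (p.2 + 1))
  | 2 => Finset.Ico (k * p.1) (k * (p.1 + 1)) ×ˢ Finset.Ioo (k * p.2) (k * (p.2 + 1))
  | 3 => Finset.Ico (k * p.1) (k * (p.1 + 1)) ×ˢ Finset.Ico (k * p.2) (k * (p.2 + 1) - 1)

section Subsquares

variable {m k : ℕ} {p q : ℕ × ℕ} {s : Fin 4}

lemma mem_subsquares : q ∈ subsquares k p ↔
    (k * p.1 ≤ q.1 ∧ q.1 + 1 ≤ k * (p.1 + 1)) ∧ k * p.2 ≤ q.2 ∧ q.2 + 1 ≤ k * (p.2 + 1) := by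
  simp only [subsquares, Finset.mem_product, Finset.mem_Ico, Nat.succ_le_iff]

lemma subsquaresOffSide_subset : subsquaresOffSide k p s ⊆ subsquares k p := by
  fin_cases s
  · exact Finset.product_subset_product_left Finset.Ioo_subset_Ico_self
  · exact Finset.product_subset_product_left (Finset.Ico_subset_Ico_right (Nat.sub_le _ _))
  · exact Finset.product_subset_product_right Finset.Ioo_subset_Ico_self
  · exact Finset.product_subset_product_right (Finset.Ico_subset_Ico_right (Nat.sub_le _ _))

lemma card_subsquaresOffSide : (subsquaresOffSide k p s).card = k * (k - 1) := by
  fin_cases s <;> simp [subsquaresOffSide, mul_add, mul_comm, Nat.sub_right_comm _ 1]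

lemma pos_of_mem_subsquares (h : q ∈ subsquares k p) : 0 < k :=
  Nat.pos_of_mul_pos_right (q.1.succ_pos.trans_le (mem_subsquares.1 h).1.2)

lemma lt_mul_of_mem_subsquares (h : q ∈ subsquares k p) (hp : p.1 < m ∧ p.2 < m) :
    q.1 < m * k ∧ q.2 < m * k := by
  obtain ⟨⟨-, h₁⟩, -, h₂⟩ := mem_subsquares.1 h
  rw [mul_comm m]
  exact ⟨h₁.trans (Nat.mul_le_mul_left k hp.1), h₂.trans (Nat.mul_le_mul_left k hp.2)⟩

lemma gridSq_subset_gridSq (hm : 0 < m) (h : q ∈ subsquares k p) :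
    gridSq (m * k) q.1 q.2 ⊆ gridSq m p.1 p.2 := by
  have hk := pos_of_mem_subsquares h
  obtain ⟨⟨hl, hr⟩, hb, ht⟩ := mem_subsquares.1 h
  refine prod_mono (Icc_subset_Icc ((div_le_div_mul_iff hm hk).2 hl) ?_)
    (Icc_subset_Icc ((div_le_div_mul_iff hm hk).2 hb) ?_)
  · exact_mod_cast (div_mul_le_div_iff hm hk).2 hr
  · exact_mod_cast (div_mul_le_div_iff hm hk).2 ht

end Subsquares

section NestedSequence

variable {f k : ℕ → ℕ} {S : ℕ → Set (ℕ × ℕ)} {Q : ℕ → ℕ × ℕ}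

lemma exists_seq_subsquaresOffSide (hf : ∀ n, f (n + 1) = f n * k n) (hS : ∀ n, (S n).Finite)
    (hS_zero : (S 0).ncard < f 0 ^ 2) (hS_succ : ∀ n, (S (n + 1)).ncard < k n * (k n - 1))
    (s : ℕ → Fin 4) :
    ∃ Q : ℕ → ℕ × ℕ, (∀ n, (Q n).1 < f n ∧ (Q n).2 < f n ∧ Q n ∉ S n) ∧
      ∀ n, Q (n + 1) ∈ subsquaresOffSide (k n) (Q n) (s n) := by
  obtain ⟨p₀, hp₀, hp₀S⟩ : ∃ p ∈ subsquares (f 0) 0, p ∉ S 0 := by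
    refine exists_mem_notMem_of_ncard_lt_ncard (t := subsquares (f 0) 0) ?_ (hS 0)
    simpa [ncard_coe_finset, subsquares, sq] using hS_zero
  have hnext (n p) : ∃ q ∈ subsquaresOffSide (k n) p (s n), q ∉ S (n + 1) := by
    refine exists_mem_notMem_of_ncard_lt_ncard (t := subsquaresOffSide (k n) p (s n)) ?_ (hS _)
    simpa only [ncard_coe_finset, card_subsquaresOffSide] using hS_succ n
  choose child hchild hchildS using hnext
  let Q (n : ℕ) : ℕ × ℕ := n.rec p₀ child
  have hQ (n) : Q (n + 1) ∈ subsquaresOffSide (k n) (Q n) (s n) := hchild n (Q n)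
  refine ⟨Q, fun n => ?_, hQ⟩
  rw [← and_assoc]
  induction n with
  | zero => exact ⟨one_mul (f 0) ▸ lt_mul_of_mem_subsquares hp₀ (m := 1) (by simp), hp₀S⟩
  | succ n ih =>
    exact ⟨hf n ▸ lt_mul_of_mem_subsquares (subsquaresOffSide_subset (hQ n)) ih.1, hchildS n (Q n)⟩

lemma mem_interior_gridSq_of_forall_mem (hf : ∀ n, f (n + 1) = f n * k n) (hfpos : ∀ n, 0 < f n)
    {s : ℕ → Fin 4} (hs : ∀ t, ∃ᶠ n in Filter.atTop, s n = t)
    (hQ : ∀ n, Q (n + 1) ∈ subsquaresOffSide (k n) (Q n) (s n)) {x : ℝ × ℝ}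
    (hx : ∀ n, x ∈ gridSq (f n) (Q n).1 (Q n).2) (n : ℕ) :
    x ∈ interior (gridSq (f n) (Q n).1 (Q n).2) := by
  have hsub (n) : Q (n + 1) ∈ subsquares (k n) (Q n) := subsquaresOffSide_subset (hQ n)
  have hside (t : Fin 4) : ∃ᶠ n in Filter.atTop, Q (n + 1) ∈ subsquaresOffSide (k n) (Q n) t :=
    (hs t).mono fun n hn => hn ▸ hQ n
  have hleft : ∃ᶠ n in Filter.atTop, k n * (Q n).1 < (Q (n + 1)).1 :=
    (hside 0).mono fun n hn => (Finset.mem_Ioo.1 (Finset.mem_product.1 hn).1).1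
  have hright : ∃ᶠ n in Filter.atTop, (Q (n + 1)).1 + 1 < k n * ((Q n).1 + 1) :=
    (hside 1).mono fun n hn =>
      Nat.add_lt_of_lt_sub (Finset.mem_Ico.1 (Finset.mem_product.1 hn).1).2
  have hbottom : ∃ᶠ n in Filter.atTop, k n * (Q n).2 < (Q (n + 1)).2 :=
    (hside 2).mono fun n hn => (Finset.mem_Ioo.1 (Finset.mem_product.1 hn).2).1
  have htop : ∃ᶠ n in Filter.atTop, (Q (n + 1)).2 + 1 < k n * ((Q n).2 + 1) :=
    (hside 3).mono fun n hn =>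
      Nat.add_lt_of_lt_sub (Finset.mem_Ico.1 (Finset.mem_product.1 hn).2).2
  rw [interior_gridSq]
  exact ⟨mem_Ioo_div_of_frequently hf hfpos (fun n => (mem_subsquares.1 (hsub n)).1)
      hleft hright (fun n => (hx n).1) n,
    mem_Ioo_div_of_frequently hf hfpos (fun n => (mem_subsquares.1 (hsub n)).2)
      hbottom htop (fun n => (hx n).2) n⟩

end NestedSequence

theorem exists_nested_squares_avoiding_general (f k : ℕ → ℕ) (hf : ∀ n, f (n + 1) = f n * k n)
    (S : ℕ → Set (ℕ × ℕ)) (hS : ∀ n, (S n).Finite) (hS_zero : (S 0).ncard < f 0 ^ 2)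
    (hS_succ : ∀ n, (S (n + 1)).ncard < k n * (k n - 1)) :
    (∃ Q : ℕ → ℕ × ℕ,
      (∀ n, (Q n).1 < f n ∧ (Q n).2 < f n ∧ Q n ∉ S n) ∧
      (∀ n, gridSq (f (n + 1)) (Q (n + 1)).1 (Q (n + 1)).2 ⊆ gridSq (f n) (Q n).1 (Q n).2)) ∧
    ∃ x ∈ Set.Icc (0 : ℝ) 1 ×ˢ Set.Icc (0 : ℝ) 1,
      ∀ n, ∀ p ∈ S n, x ∉ gridSq (f n) p.1 p.2 := by
  obtain ⟨Q, hQS, hQ⟩ := exists_seq_subsquaresOffSide hf hS hS_zero hS_succ (Fin.ofNat 4)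
  have hfpos (n) : 0 < f n := (hQS n).1.pos
  have hnested (n) : gridSq (f (n + 1)) (Q (n + 1)).1 (Q (n + 1)).2 ⊆
      gridSq (f n) (Q n).1 (Q n).2 :=
    hf n ▸ gridSq_subset_gridSq (hfpos n) (subsquaresOffSide_subset (hQ n))
  obtain ⟨x, hx⟩ := IsCompact.nonempty_iInter_of_sequence_nonempty_isCompact_isClosed
    (fun n => gridSq (f n) (Q n).1 (Q n).2) hnested (fun _ => gridSq_nonempty) isCompact_gridSq
    (fun _ => isCompact_gridSq.isClosed)
  rw [mem_iInter] at hx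
  refine ⟨⟨Q, hQS, hnested⟩, x, gridSq_subset_unitSquare (hQS 0).1 (hQS 0).2.1 (hx 0),
    fun n p hp hxp => (hQS n).2.2 ?_⟩
  have hQp : Q n = p := eq_of_mem_interior_gridSq_of_mem_gridSq
    (mem_interior_gridSq_of_forall_mem hf hfpos frequently_fin_ofNat_eq hQ hx n) hxp
  exact hQp ▸ hp

/-- given grids `𝒬_{f(n)}` with `f` growing fast enough and small families
`S_n ⊆ 𝒬_{f(n)}`, there is a nested sequence of squares `Q_n ∈ 𝒬_{f(n)} \ S_n`; in particular
some point of the unit square avoids all squares in all the `S_n`. -/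
theorem exists_nested_squares_avoiding (f g : ℕ → ℕ) (hf0 : f 0 = 5) (hg0 : g 0 = 1)
    (hfpos : ∀ n, 1 ≤ f n) (hdvd : ∀ n, f n ∣ f (n + 1))
    (hgrow : ∀ n, 5 * g (n + 1) * (f n) ^ 2 < f (n + 1))
    (S : ℕ → Set (ℕ × ℕ)) (hS : ∀ n, ∀ p ∈ S n, p.1 < f n ∧ p.2 < f n)
    (hScard : ∀ n, (S n).ncard < 5 * f n * g n) :
    (∃ Q : ℕ → ℕ × ℕ,
      (∀ n, (Q n).1 < f n ∧ (Q n).2 < f n ∧ Q n ∉ S n) ∧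
      (∀ n, gridSq (f (n + 1)) (Q (n + 1)).1 (Q (n + 1)).2 ⊆ gridSq (f n) (Q n).1 (Q n).2)) ∧
    ∃ x ∈ Set.Icc (0 : ℝ) 1 ×ˢ Set.Icc (0 : ℝ) 1,
      ∀ n, ∀ p ∈ S n, x ∉ gridSq (f n) p.1 p.2 := by
  choose k hk using hdvd
  exact exists_nested_squares_avoiding_general f k hk S
    (fun n => ((finite_Iio (f n)).prod (finite_Iio (f n))).subset (hS n))
    (by simpa [hf0, hg0] using hScard 0)
    (fun n => lt_mul_pred_of_growth (hk n ▸ hScard (n + 1)) (hk n ▸ hgrow n))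
end
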